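/- Let H be a finite-dimensional complex Hilbert space, Ŷ a self-adjoint operator on H with nondegenerate spectrum and orthonormal eigenbasis (φ_y)_{y∈σ(Ŷ)}, X̂ an operator on H, and ρ̂ a density matrix with ⟨φ_y, ρ̂ φ_y⟩ ≠ 0 for all y ∈ σ(Ŷ). Then the function f ↦ Tr(ρ̂ (X̂ − f(Ŷ))† (X̂ − f(Ŷ))), over functions f : σ(Ŷ) → ℂ, admits the unique minimizer f₀^ℓ(y) = ⟨φ_y, X̂ ρ̂ φ_y⟩ / ⟨φ_y, ρ̂ φ_y⟩. -/

import Mathlib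

/-!
Evaluated in the eigenbasis, the error is `∑ y, ⟪w y, ρ̂ w y⟫` with
`w y = X̂† φ y - conj (f y) • φ y`, so each `f y` enters only one summand. The value
`f₀ y = ⟪φ y, X̂ ρ̂ φ y⟫ / ⟪φ y, ρ̂ φ y⟫` is the one making `w y` orthogonal to `φ y` for the form
`⟪·, ρ̂ ·⟫`, and the Pythagorean identity for that form shows that the error of any `f` exceeds
that of `f₀` by `∑ y, |f₀ y - f y|² ⟪φ y, ρ̂ φ y⟫`.
-/

open scoped ComplexOrder
noncomputable section

variable {H : Type*} [NormedAddCommGroup H] [InnerProductSpace ℂ H] [FiniteDimensional ℂ H]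

/-- The rank-one orthogonal projector onto the line spanned by a unit vector `v`. -/
def proj (v : H) : H →ₗ[ℂ] H where
  toFun w := (inner ℂ v w : ℂ) • v
  map_add' x y := by simp [inner_add_right, add_smul]
  map_smul' c x := by simp [inner_smul_right, smul_smul]

/-- The operator `f(Ŷ) = Σ_y f(y) Π_y` associated to a function `f` on the spectrum,
for an operator with orthonormal eigenbasis `φ`. -/
def opF {ι : Type*} [Fintype ι] (φ : ι → H) (f : ι → ℂ) : H →ₗ[ℂ] H :=
  ∑ i, f i • proj (φ i)


/-- The "left" squared error `Tr(ρ̂ (X̂ − f(Ŷ))† (X̂ − f(Ŷ)))`. -/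
def errL {ι : Type*} [Fintype ι] (φ : ι → H) (ρ X : H →ₗ[ℂ] H) (f : ι → ℂ) : ℂ :=
  LinearMap.trace ℂ H
    (ρ ∘ₗ (LinearMap.adjoint (X - opF φ f) ∘ₗ (X - opF φ f)))

omit [FiniteDimensional ℂ H] in
theorem isSymmetric_of_inner_map_nonneg {T : H →ₗ[ℂ] H} (hT : ∀ v, 0 ≤ inner ℂ v (T v)) :
    T.IsSymmetric := by
  refine T.isSymmetric_iff_inner_map_self_real.mpr fun v ↦ ?_
  have hreal : (starRingEnd ℂ) (inner ℂ v (T v)) = inner ℂ v (T v) :=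
    Complex.conj_eq_iff_im.mpr (Complex.nonneg_iff.mp (hT v)).2.symm
  rw [inner_conj_symm, ← hreal, inner_conj_symm]

section QuadraticForm

variable {𝕜 E : Type*} [RCLike 𝕜] [NormedAddCommGroup E] [InnerProductSpace 𝕜 E]

theorem inner_map_add_smul_self_of_inner_map_eq_zero {T : E →ₗ[𝕜] E} (hT : T.IsSymmetric)
    {w v : E} (hwv : inner 𝕜 w (T v) = 0) (c : 𝕜) :
    inner 𝕜 (w + c • v) (T (w + c • v)) = inner 𝕜 w (T w) + (‖c‖ : 𝕜) ^ 2 * inner 𝕜 v (T v) := by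
  have hvw : inner 𝕜 v (T w) = 0 := by rw [← hT, inner_eq_zero_symm, hwv]
  simp only [map_add, map_smul, inner_add_left, inner_add_right, inner_smul_left,
    inner_smul_right, hwv, hvw, ← RCLike.conj_mul]
  ring

theorem trace_comp_adjoint_comp_eq_sum_inner {F ι : Type*} [NormedAddCommGroup F]
    [InnerProductSpace 𝕜 F] [FiniteDimensional 𝕜 E] [FiniteDimensional 𝕜 F] [Fintype ι]
    (φ : OrthonormalBasis ι 𝕜 F) (T : E →ₗ[𝕜] E) (A : E →ₗ[𝕜] F) :
    LinearMap.trace 𝕜 E (T ∘ₗ A.adjoint ∘ₗ A) =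
      ∑ i, inner 𝕜 (A.adjoint (φ i)) (T (A.adjoint (φ i))) := by
  rw [← LinearMap.comp_assoc, LinearMap.trace_comp_comm', LinearMap.trace_eq_sum_inner _ φ]
  simp only [LinearMap.comp_apply, LinearMap.adjoint_inner_left]

end QuadraticForm

section OpF

variable {ι : Type*} [Fintype ι]

omit [FiniteDimensional ℂ H] in
theorem opF_apply_of_orthonormal {φ : ι → H} (hφ : Orthonormal ℂ φ) (f : ι → ℂ) (i : ι) :
    opF φ f (φ i) = f i • φ i := by
  classical
  simp [opF, proj, orthonormal_iff_ite.mp hφ]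

theorem adjoint_proj (v : H) : (proj v).adjoint = proj v := by
  refine ((LinearMap.eq_adjoint_iff _ _).mpr fun x y ↦ ?_).symm
  simp only [proj, LinearMap.coe_mk, AddHom.coe_mk, inner_smul_left, inner_smul_right,
    inner_conj_symm, mul_comm]

theorem adjoint_opF (φ : ι → H) (f : ι → ℂ) : (opF φ f).adjoint = opF φ (star f) := by
  simp only [opF, map_sum, map_smulₛₗ, adjoint_proj, Pi.star_apply, starRingEnd_apply]

end OpF

section LeftError

variable {ι : Type*}

/-- The candidate minimizer `f₀^ℓ(y) = ⟨φ_y, X̂ ρ̂ φ_y⟩ / ⟨φ_y, ρ̂ φ_y⟩` of the left squared error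
`errL φ ρ X`. Where the denominator vanishes, its value is `0`. -/
def minimizerL (φ : ι → H) (ρ X : H →ₗ[ℂ] H) (i : ι) : ℂ :=
  inner ℂ (φ i) ((X ∘ₗ ρ) (φ i)) / inner ℂ (φ i) (ρ (φ i))

theorem inner_adjoint_sub_minimizerL_smul (φ : ι → H) {ρ : H →ₗ[ℂ] H} (X : H →ₗ[ℂ] H) {i : ι}
    (hi : inner ℂ (φ i) (ρ (φ i)) ≠ 0) :
    inner ℂ (X.adjoint (φ i) - star (minimizerL φ ρ X i) • φ i) (ρ (φ i)) = 0 := by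
  rw [inner_sub_left, LinearMap.adjoint_inner_left, inner_smul_left, starRingEnd_apply, star_star,
    minimizerL, div_mul_cancel₀ _ hi, LinearMap.comp_apply, sub_self]

variable [Fintype ι] (φ : OrthonormalBasis ι ℂ H)

theorem errL_eq_sum_inner (ρ X : H →ₗ[ℂ] H) (f : ι → ℂ) :
    errL φ ρ X f = ∑ i, inner ℂ (X.adjoint (φ i) - star (f i) • φ i)
      (ρ (X.adjoint (φ i) - star (f i) • φ i)) := by
  have hadj (i : ι) : (X - opF φ f).adjoint (φ i) = X.adjoint (φ i) - star (f i) • φ i := by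
    rw [map_sub, adjoint_opF, LinearMap.sub_apply, opF_apply_of_orthonormal φ.orthonormal,
      Pi.star_apply]
  simp only [errL, trace_comp_adjoint_comp_eq_sum_inner φ, hadj]

theorem errL_eq_errL_minimizerL_add_sum {ρ : H →ₗ[ℂ] H} (hρ : ρ.IsSymmetric)
    (hφ : ∀ i, inner ℂ (φ i) (ρ (φ i)) ≠ 0) (X : H →ₗ[ℂ] H) (f : ι → ℂ) :
    errL φ ρ X f = errL φ ρ X (minimizerL φ ρ X) +
      ∑ i, (‖minimizerL φ ρ X i - f i‖ : ℂ) ^ 2 * inner ℂ (φ i) (ρ (φ i)) := by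
  rw [errL_eq_sum_inner, errL_eq_sum_inner, ← Finset.sum_add_distrib]
  refine Finset.sum_congr rfl fun i _ ↦ ?_
  have hdecomp : X.adjoint (φ i) - star (f i) • φ i =
      (X.adjoint (φ i) - star (minimizerL φ ρ X i) • φ i) +
        star (minimizerL φ ρ X i - f i) • φ i := by
    rw [star_sub]
    module
  rw [hdecomp, inner_map_add_smul_self_of_inner_map_eq_zero hρ
    (inner_adjoint_sub_minimizerL_smul φ X (hφ i)), norm_star]
  rfl

theorem stmt3_general {ρ : H →ₗ[ℂ] H} (hρ : ρ.IsSymmetric)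
    (hφ : ∀ i, 0 < inner ℂ (φ i) (ρ (φ i))) (X : H →ₗ[ℂ] H) :
    (∀ f : ι → ℂ, errL φ ρ X (minimizerL φ ρ X) ≤ errL φ ρ X f) ∧
    (∀ f : ι → ℂ, (∀ g : ι → ℂ, errL φ ρ X f ≤ errL φ ρ X g) → f = minimizerL φ ρ X) := by
  have hexcess := errL_eq_errL_minimizerL_add_sum φ hρ (fun i ↦ (hφ i).ne') X
  have hterm (f : ι → ℂ) (i : ι) :
      0 ≤ (‖minimizerL φ ρ X i - f i‖ : ℂ) ^ 2 * inner ℂ (φ i) (ρ (φ i)) :=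
    mul_nonneg (by exact_mod_cast sq_nonneg ‖minimizerL φ ρ X i - f i‖) (hφ i).le
  have hmin (f : ι → ℂ) : errL φ ρ X (minimizerL φ ρ X) ≤ errL φ ρ X f := by
    rw [hexcess f]
    exact le_add_of_nonneg_right (Finset.sum_nonneg fun i _ ↦ hterm f i)
  refine ⟨hmin, fun f hf ↦ ?_⟩
  have hsum : ∑ i, (‖minimizerL φ ρ X i - f i‖ : ℂ) ^ 2 * inner ℂ (φ i) (ρ (φ i)) = 0 :=
    left_eq_add.mp (((hmin f).antisymm (hf _)).trans (hexcess f))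
  funext i
  have hi := (Finset.sum_eq_zero_iff_of_nonneg fun i _ ↦ hterm f i).mp hsum i (Finset.mem_univ i)
  have hnorm : ‖minimizerL φ ρ X i - f i‖ = 0 := by simpa [(hφ i).ne'] using hi
  exact (norm_sub_eq_zero_iff.mp hnorm).symm

end LeftError

/-- for `Ŷ` self-adjoint with nondegenerate spectrum (orthonormal eigenbasis `φ`,
injective real eigenvalues `y`), `X̂` an operator, and `ρ̂` a density matrix with
`⟨φ_y, ρ̂ φ_y⟩ ≠ 0` for all `y`, the map `f ↦ Tr(ρ̂ (X̂ − f(Ŷ))† (X̂ − f(Ŷ)))` has the unique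
minimizer `f₀^ℓ(y) = ⟨φ_y, X̂ρ̂ φ_y⟩ / ⟨φ_y, ρ̂ φ_y⟩`. -/
theorem stmt3 {ι : Type*} [Fintype ι] (φ : OrthonormalBasis ι ℂ H)
    (Y : H →ₗ[ℂ] H) (y : ι → ℝ) (hy : Function.Injective y)
    (hY : ∀ i, Y (φ i) = (y i : ℂ) • φ i)
    (ρ : H →ₗ[ℂ] H) (hpos : ∀ v, 0 ≤ (inner ℂ v (ρ v) : ℂ))
    (htr : LinearMap.trace ℂ H ρ = 1)
    (hρ : ∀ i, (inner ℂ (φ i) (ρ (φ i)) : ℂ) ≠ 0) (X : H →ₗ[ℂ] H) :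
    (∀ f : ι → ℂ,
      errL (fun i => φ i) ρ X
          (fun i => (inner ℂ (φ i) ((X ∘ₗ ρ) (φ i)) : ℂ) / (inner ℂ (φ i) (ρ (φ i)) : ℂ)) ≤
        errL (fun i => φ i) ρ X f) ∧
    (∀ f : ι → ℂ, (∀ g : ι → ℂ, errL (fun i => φ i) ρ X f ≤ errL (fun i => φ i) ρ X g) →
      f = fun i => (inner ℂ (φ i) ((X ∘ₗ ρ) (φ i)) : ℂ) / (inner ℂ (φ i) (ρ (φ i)) : ℂ)) :=
  stmt3_general φ (isSymmetric_of_inner_map_nonneg hpos)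
    (fun i ↦ lt_of_le_of_ne' (hpos (φ i)) (hρ i)) X
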